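/- For every coalition C ⊆ AG and all formulas φ, ψ ∈ Φ, the formula (⟨∅⟩φ ∧ ⟨C⟩ψ) → ⟨C⟩(φ∧ψ) (Special independence of agents, A-SIA) is derivable in MCL. -/

import Mathlib

namespace CL

/-- The language Φ of coalition logic over a set of agents, with atomic
propositions drawn from ℕ (a countable set). -/
inductive Formula (Agent : Type) : Type
  | top : Formula Agent
  | atom : ℕ → Formula Agent
  | neg : Formula Agent → Formula Agent
  | and : Formula Agent → Formula Agent → Formula Agent
  | coal : Set Agent → Formula Agent → Formula Agent

namespace Formula

variable {Agent : Type}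

def bot : Formula Agent := neg top

def or (φ ψ : Formula Agent) : Formula Agent := neg (and (neg φ) (neg ψ))

def imp (φ ψ : Formula Agent) : Formula Agent := or (neg φ) ψ

def iff (φ ψ : Formula Agent) : Formula Agent := and (imp φ ψ) (imp ψ φ)

end Formula

/-- The three frame properties: seriality, independence of agents, determinism.
`ES` is represented by `Set P3`, the eight subsets of {S, I, D}. -/
inductive P3 : Type
  | S | I | D
deriving DecidableEq
/-- Propositional evaluation of a formula, treating coalition formulas and
atoms as propositional atoms (valued by `v`). -/
def Formula.evalProp {Agent : Type} (v : Formula Agent → Bool) : Formula Agent → Bool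
  | .top => true
  | .atom n => v (.atom n)
  | .neg φ => !(φ.evalProp v)
  | .and φ ψ => φ.evalProp v && ψ.evalProp v
  | .coal C φ => v (.coal C φ)

/-- A propositional tautology. -/
def Tautology {Agent : Type} (φ : Formula Agent) : Prop :=
  ∀ v : Formula Agent → Bool, φ.evalProp v = true

/-- Derivability in the axiomatic system XL, for X ∈ ES (X : Set P3).
MCL is the case X = ∅ and CL is the case X = {S, I, D}. -/
inductive Deriv {Agent : Type} (X : Set P3) : Formula Agent → Prop
  | taut {φ : Formula Agent} : Tautology φ → Deriv X φ
  | naaa (C : Set Agent) : Deriv X (Formula.neg (Formula.coal C Formula.bot))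
  | mg (C : Set Agent) (φ ψ : Formula Agent) :
      Deriv X ((Formula.coal ∅ (φ.imp ψ)).imp ((Formula.coal C φ).imp (Formula.coal C ψ)))
  | mc {C D : Set Agent} (h : C ⊆ D) (φ : Formula Agent) :
      Deriv X ((Formula.coal C φ).imp (Formula.coal D φ))
  | ser (h : P3.S ∈ X) (C : Set Agent) : Deriv X (Formula.coal C Formula.top)
  | ia (h : P3.I ∈ X) {C D : Set Agent} (hCD : C ∩ D = ∅) (φ ψ : Formula Agent) :
      Deriv X (((Formula.coal C φ).and (Formula.coal D ψ)).imp
        (Formula.coal (C ∪ D) (φ.and ψ)))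
  | det (h : P3.D ∈ X) (C : Set Agent) (φ ψ : Formula Agent) :
      Deriv X ((Formula.coal C (φ.or ψ)).imp
        ((Formula.coal C φ).or (Formula.coal Set.univ ψ)))
  | mp {φ ψ : Formula Agent} : Deriv X (φ.imp ψ) → Deriv X φ → Deriv X ψ
  | cn {φ : Formula Agent} (C : Set Agent) (ψ : Formula Agent) :
      Deriv X φ → Deriv X ((Formula.coal C ψ).imp (Formula.coal ∅ φ))

namespace Formula

variable {Agent : Type} (v : Formula Agent → Bool) (φ ψ : Formula Agent)

theorem evalProp_and_eq_true :
    (φ.and ψ).evalProp v = true ↔ φ.evalProp v = true ∧ ψ.evalProp v = true :=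
  Bool.and_eq_true_iff

theorem evalProp_imp_eq_true :
    (φ.imp ψ).evalProp v = true ↔ (φ.evalProp v = true → ψ.evalProp v = true) := by
  simp only [imp, or, evalProp, Bool.not_not, Bool.not_and, Bool.or_eq_true,
    Bool.not_eq_true', ← Bool.not_eq_true, imp_iff_not_or]

end Formula

open Formula

theorem tautology_imp_imp_and {Agent : Type} (φ ψ : Formula Agent) :
    Tautology (φ.imp (ψ.imp (φ.and ψ))) := fun v => by
  simp only [evalProp_imp_eq_true, evalProp_and_eq_true]
  exact And.intro

namespace Deriv

variable {Agent : Type} {X : Set P3} {φ ψ χ : Formula Agent}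

theorem imp_trans (hφψ : Deriv X (φ.imp ψ)) (hψχ : Deriv X (ψ.imp χ)) : Deriv X (φ.imp χ) := by
  have syllogism : Tautology ((φ.imp ψ).imp ((ψ.imp χ).imp (φ.imp χ))) := fun v => by
    simp only [evalProp_imp_eq_true]
    exact fun f g a => g (f a)
  exact mp (mp (taut syllogism) hφψ) hψχ

theorem imp_of_imp_imp_self (h : Deriv X (φ.imp (φ.imp ψ))) : Deriv X (φ.imp ψ) := by
  have contraction : Tautology ((φ.imp (φ.imp ψ)).imp (φ.imp ψ)) := fun v => by
    simp only [evalProp_imp_eq_true]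
    exact fun f a => f a a
  exact mp (taut contraction) h

theorem and_imp_of_imp_imp (h : Deriv X (φ.imp (ψ.imp χ))) : Deriv X ((φ.and ψ).imp χ) := by
  have importation : Tautology ((φ.imp (ψ.imp χ)).imp ((φ.and ψ).imp χ)) := fun v => by
    simp only [evalProp_imp_eq_true, evalProp_and_eq_true]
    exact fun f a => f a.1 a.2
  exact mp (taut importation) h

/-- Necessitation is conditional on some `⟨D⟩θ`; the antecedent `⟨C⟩φ` itself can play that
role. -/
theorem coal_imp_coal (C : Set Agent) (h : Deriv X (φ.imp ψ)) :
    Deriv X ((coal C φ).imp (coal C ψ)) :=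
  imp_of_imp_imp_self (imp_trans (cn C φ h) (mg C φ ψ))

end Deriv

theorem sia_derivable_general {Agent : Type} (X : Set P3) (C : Set Agent) (φ ψ : Formula Agent) :
    Deriv X (((coal ∅ φ).and (coal C ψ)).imp (coal C (φ.and ψ))) := by
  have h_empty : Deriv X ((coal ∅ φ).imp (coal ∅ (ψ.imp (φ.and ψ)))) :=
    Deriv.coal_imp_coal ∅ (Deriv.taut (tautology_imp_imp_and φ ψ))
  exact Deriv.and_imp_of_imp_imp (h_empty.imp_trans (Deriv.mg C ψ (φ.and ψ)))

/-- A-SIA: (⟨∅⟩φ ∧ ⟨C⟩ψ) → ⟨C⟩(φ∧ψ) is derivable in MCL (the system XL with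
X = ∅). -/
theorem sia_derivable {Agent : Type} [Fintype Agent] (C : Set Agent)
    (φ ψ : Formula Agent) :
    Deriv (∅ : Set P3)
      (((Formula.coal ∅ φ).and (Formula.coal C ψ)).imp
        (Formula.coal C (φ.and ψ))) :=
  sia_derivable_general ∅ C φ ψ

end CL
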